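/- Let 𝔤 be a finite-dimensional real vector space with a nondegenerate symmetric bilinear form B, and let 𝔲₊, 𝔥, 𝔲₋ ⊆ 𝔤 be subspaces with 𝔤 = 𝔲₊ ⊕ 𝔥 ⊕ 𝔲₋ (internal direct sum). Set 𝔭₊ := 𝔥 + 𝔲₊ and 𝔭₋ := 𝔥 + 𝔲₋, and assume B(𝔭₊, 𝔲₊) = 0 and B(𝔭₋, 𝔲₋) = 0. Then the restriction of B to 𝔥 is nondegenerate. -/

import Mathlib

theorem iSup_vecCons {α : Type*} [CompleteLattice α] {n : ℕ} (a : α) (f : Fin n → α) :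
    ⨆ i, Matrix.vecCons a f i = a ⊔ ⨆ i, f i := by
  rw [iSup, Matrix.range_cons, sSup_union, sSup_singleton, iSup]

theorem sup_eq_top_of_isInternal_three {R M : Type*} [Semiring R] [AddCommMonoid M] [Module R M]
    {p q r : Submodule R M} (hpqr : DirectSum.IsInternal ![p, q, r]) : p ⊔ q ⊔ r = ⊤ := by
  simpa only [iSup_vecCons, iSup_of_empty, sup_bot_eq, sup_assoc] using
    hpqr.submodule_iSup_eq_top

theorem separatingLeft_restrict_of_codisjoint {R M : Type*} [CommSemiring R] [AddCommMonoid M]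
    [Module R M] {B : LinearMap.BilinForm R M} (hB : B.SeparatingLeft) {p q : Submodule R M}
    (hpq : Codisjoint p q) (horthogonal : ∀ x ∈ p, ∀ y ∈ q, B x y = 0) :
    (B.restrict p).SeparatingLeft := by
  rw [LinearMap.separatingLeft_iff_ker_eq_bot] at hB ⊢
  rw [LinearMap.BilinForm.ker_restrict_eq_of_codisjoint hpq horthogonal, hB,
    Submodule.comap_bot, Submodule.ker_subtype]

theorem restriction_nondegenerate_general {R M : Type*} [CommSemiring R] [AddCommMonoid M]
    [Module R M] {B : LinearMap.BilinForm R M} (hB : B.SeparatingLeft) {uP h uM : Submodule R M}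
    (hspan : uP ⊔ h ⊔ uM = ⊤) (hP : ∀ x ∈ h, ∀ y ∈ uP, B x y = 0)
    (hM : ∀ x ∈ h, ∀ y ∈ uM, B x y = 0) :
    (B.restrict h).SeparatingLeft := by
  have hcodisjoint : Codisjoint h (uP ⊔ uM) := by
    rwa [codisjoint_iff, sup_left_comm, ← sup_assoc]
  have horthogonal (x : M) (hx : x ∈ h) : uP ⊔ uM ≤ LinearMap.ker (B x) :=
    sup_le (hP x hx) (hM x hx)
  exact separatingLeft_restrict_of_codisjoint hB hcodisjoint horthogonal

/-- If `𝔤 = 𝔲₊ ⊕ 𝔥 ⊕ 𝔲₋` with `B` nondegenerate symmetric, `B(𝔭₊, 𝔲₊) = 0` and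
`B(𝔭₋, 𝔲₋) = 0` where `𝔭± = 𝔥 + 𝔲±`, then the restriction of `B` to `𝔥` is
nondegenerate. -/
theorem restriction_nondegenerate {V : Type*} [AddCommGroup V] [Module ℝ V]
    [FiniteDimensional ℝ V]
    (B : LinearMap.BilinForm ℝ V)
    (hsymm : ∀ x y : V, B x y = B y x)
    (hnd : ∀ x : V, (∀ y : V, B x y = 0) → x = 0)
    (uP h uM : Submodule ℝ V)
    (hdirect : DirectSum.IsInternal (![uP, h, uM] : Fin 3 → Submodule ℝ V))
    (hP : ∀ x ∈ h ⊔ uP, ∀ y ∈ uP, B x y = 0)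
    (hM : ∀ x ∈ h ⊔ uM, ∀ y ∈ uM, B x y = 0) :
    ∀ x ∈ h, (∀ y ∈ h, B x y = 0) → x = 0 := by
  intro x hx hxh
  exact (Submodule.mk_eq_zero h hx).mp <| restriction_nondegenerate_general hnd
    (sup_eq_top_of_isInternal_three hdirect) (fun x hx ↦ hP x (Submodule.mem_sup_left hx))
    (fun x hx ↦ hM x (Submodule.mem_sup_left hx)) ⟨x, hx⟩ fun y ↦ hxh y y.2
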